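/- In the setting of the template with P = Š_1 and the construction Ω described in the context: if there is a homomorphism g : A → Ω(B), then there is a homomorphism f : Γ(A) → B; explicitly, any map f that sends each Š-edge s ∈ Š^A to some witness of the edge g^{Š}(s) ∈ Š^{Ω(B)} is such a homomorphism. -/

import Mathlib

/-!
Fix `g : A → Ω(B)` and a map `f` choosing a witness `f s` for each `Š`-edge `s` of `A`. A
homomorphism `h : T → A` from a tree induces the map `f ∘ Γ(h)` on the `Š`-edges of `T`
(`pullE f h` below). By induction on the V-term `t ∈ 𝒯_V`, for every `h : T(t) → A` the map
`f ∘ Γ(h)` belongs to the `t`-entry of `g (h r_t)` (`pullE_mem`). At `vertex` the entry is the set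
of all maps. At `pr_i(edge_R(ts))`, the restrictions of `f ∘ Γ(h)` to the subtrees lie in the
entries prescribed by the induction hypothesis, and `g ∘ h` sends the root edge to an `R`-edge of
`Ω(B)`, so (A1), or (B1) with witness `f (h r)`, applies (`pullE_edge`).

Consequently `f ∘ Γ(h)` is a homomorphism `Γ(Q_R) → B` for every `h : Q_R → A` (`pullE_isHom`):
when `t_R` is a V-term because the entries consist of homomorphisms, and when `t_R` is an
edge term by (A2) or (B2). An `R`-edge of `Γ(A)` is the image under `Γ(h)`, for some such `h`, of
the tuple `(x_1, …, x_k)`, which is an `R`-edge of `Γ(Q_R)` via the identity. Hence `f` maps it to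
an `R`-edge of `B`.
-/

/-- A relational signature: a type of relation symbols, each with a positive arity. -/
structure Signature : Type 1 where
  symb : Type
  ar : symb → ℕ
  ar_pos : ∀ R, 0 < ar R

/-- A relational structure over the signature `σ`. -/
structure Struct (σ : Signature) : Type 1 where
  dom : Type
  rel : ∀ R : σ.symb, Set (Fin (σ.ar R) → dom)

variable {σ τ υ : Signature}

/-- `f` is a homomorphism of `σ`-structures from `A` to `B`. -/
def IsHom (A B : Struct σ) (f : A.dom → B.dom) : Prop :=
  ∀ R : σ.symb, ∀ x ∈ A.rel R, (fun i => f (x i)) ∈ B.rel R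

/-- `A → B`: there exists a homomorphism from `A` to `B`. -/
def HomEx (A B : Struct σ) : Prop := ∃ f, IsHom A B f

/-- Terms over `σ` whose denotation is a tree rooted in a vertex: `vertex` is a V-term, and
`pr R i ts` denotes the V-term `pr_i(edge_R(ts))`.  (An R-term `edge_R(t_1, …, t_k)` is
represented by the symbol `R` together with the tuple `ts` of V-terms.) -/
inductive VTerm (σ : Signature) : Type
  | vertex : VTerm σ
  | pr (R : σ.symb) (i : Fin (σ.ar R)) (ts : Fin (σ.ar R) → VTerm σ) : VTerm σ

/-- The domain of the tree denoted by a V-term. -/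
def VTerm.domType : VTerm σ → Type
  | .vertex => PUnit
  | .pr R _ ts => (i : Fin (σ.ar R)) × (ts i).domType

/-- The root of the tree denoted by a V-term. -/
def VTerm.root : (t : VTerm σ) → t.domType
  | .vertex => PUnit.unit
  | .pr _ i ts => ⟨i, (ts i).root⟩

/-- The domain of the tree denoted by the R-term `edge_R(ts)`: the disjoint union of the
domains of the subtrees. -/
def edgeDom (R : σ.symb) (ts : Fin (σ.ar R) → VTerm σ) : Type :=
  (i : Fin (σ.ar R)) × (ts i).domType

/-- The root edge of the tree denoted by the R-term `edge_R(ts)`. -/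
def edgeRoot (R : σ.symb) (ts : Fin (σ.ar R) → VTerm σ) : Fin (σ.ar R) → edgeDom R ts :=
  fun i => ⟨i, (ts i).root⟩

/-- The relations of the tree denoted by a V-term: the relations of the disjoint subtrees,
together with the root edge. -/
def VTerm.rel : (t : VTerm σ) → ∀ S : σ.symb, Set (Fin (σ.ar S) → t.domType)
  | .vertex, _ => ∅
  | .pr R _ ts, S =>
      {x | ∃ i : Fin (σ.ar R), ∃ y ∈ (ts i).rel S, x = fun j => ⟨i, y j⟩} ∪
      {x | ∃ h : R = S, x = fun j => edgeRoot R ts (Fin.cast (congrArg σ.ar h.symm) j)}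

/-- The tree `T(t)` denoted by a V-term `t`. -/
def VTerm.tree (t : VTerm σ) : Struct σ := ⟨t.domType, t.rel⟩

/-- The tree `T(t)` denoted by the R-term `t = edge_R(ts)`. -/
def ETerm.tree (R : σ.symb) (ts : Fin (σ.ar R) → VTerm σ) : Struct σ where
  dom := edgeDom R ts
  rel S :=
    {x | ∃ i : Fin (σ.ar R), ∃ y ∈ (ts i).rel S, x = fun j => ⟨i, y j⟩} ∪
    {x | ∃ h : R = S, x = fun j => edgeRoot R ts (Fin.cast (congrArg σ.ar h.symm) j)}

/-- The V-subterms of a V-term. -/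
def VTerm.vsub : VTerm σ → Set (VTerm σ)
  | .vertex => {.vertex}
  | .pr R i ts => insert (.pr R i ts) (⋃ j, (ts j).vsub)

/-- The S-subterms of a V-term, for each `σ`-symbol `S` (an S-term `edge_S(us)` being
represented by the tuple `us`). -/
def VTerm.esub : VTerm σ → ∀ S : σ.symb, Set (Fin (σ.ar S) → VTerm σ)
  | .vertex, _ => ∅
  | .pr R _ ts, S =>
      {us | ∃ h : R = S, us = fun j => ts (Fin.cast (congrArg σ.ar h.symm) j)} ∪
      {us | ∃ j, us ∈ (ts j).esub S}

/-- A term is either a V-term or an R-term `edge_R(ts)` for some symbol `R`. -/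
def Term (σ : Signature) : Type := VTerm σ ⊕ (Σ S : σ.symb, Fin (σ.ar S) → VTerm σ)

/-- The tree denoted by a term. -/
def Term.tree : Term σ → Struct σ
  | .inl t => t.tree
  | .inr ⟨S, ts⟩ => ETerm.tree S ts

/-- The V-subterms of a term. -/
def Term.vsub : Term σ → Set (VTerm σ)
  | .inl t => t.vsub
  | .inr ⟨_, ts⟩ => ⋃ j, (ts j).vsub

/-- The S-subterms of a term. -/
def Term.esub : Term σ → ∀ S : σ.symb, Set (Fin (σ.ar S) → VTerm σ)
  | .inl t => t.esub
  | .inr ⟨R, ts⟩ => fun S =>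
      {us | ∃ h : R = S, us = fun j => ts (Fin.cast (congrArg σ.ar h.symm) j)} ∪
      {us | ∃ j, us ∈ (ts j).esub S}

/-- `𝒯_V`: all V-subterms of the chosen terms `t_R`. -/
def TVs (tq : τ.symb → Term σ) : Set (VTerm σ) := ⋃ R, (tq R).vsub

/-- `𝒯_S`: all S-subterms of the chosen terms `t_R`. -/
def TEs (tq : τ.symb → Term σ) (S : σ.symb) : Set (Fin (σ.ar S) → VTerm σ) := ⋃ R, (tq R).esub S

/-- The central Pultr functor for the template where `P = Š₁` consists of a single `Š`-edge
(`Š = Sc`), `Q_R = T(tq R)`, and `ε_{i,R}` selects the `Š`-edge `x R i` of `Q_R`. -/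
def GammaE (Sc : σ.symb) (tq : τ.symb → Term σ)
    (x : ∀ R : τ.symb, Fin (τ.ar R) → (Fin (σ.ar Sc) → ((tq R).tree).dom))
    (A : Struct σ) : Struct τ where
  dom := {e : Fin (σ.ar Sc) → A.dom // e ∈ A.rel Sc}
  rel R := {y | ∃ h : ((tq R).tree).dom → A.dom, IsHom ((tq R).tree) A h ∧
      ∀ i, (y i).1 = fun j => h (x R i j)}

/-- Domain of `Ω(B)`: tuples of sets of homomorphisms `Γ(T(t)) → B`, indexed by `t ∈ 𝒯_V`,
whose entry at `vertex` is `{∅}` (the set containing the empty map, i.e. the full set of maps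
from the empty domain of `Γ(T(vertex))`). -/
def OmEDom (Sc : σ.symb) (tq : τ.symb → Term σ)
    (x : ∀ R : τ.symb, Fin (τ.ar R) → (Fin (σ.ar Sc) → ((tq R).tree).dom))
    (B : Struct τ) : Type :=
  {U : (t : {t : VTerm σ // t ∈ TVs tq}) → Set ((GammaE Sc tq x t.1.tree).dom → B.dom) //
    (∀ t, ∀ f ∈ U t, IsHom (GammaE Sc tq x t.1.tree) B f) ∧
    (∀ h : VTerm.vertex ∈ TVs tq, U ⟨.vertex, h⟩ = Set.univ)}

open Classical in
/-- The entry of `U` at the V-term `t` (by convention `∅` if `t ∉ 𝒯_V`). -/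
noncomputable def UextE (Sc : σ.symb) (tq : τ.symb → Term σ)
    (x : ∀ R : τ.symb, Fin (τ.ar R) → (Fin (σ.ar Sc) → ((tq R).tree).dom))
    (B : Struct τ) (U : OmEDom Sc tq x B) (t : VTerm σ) :
    Set ((GammaE Sc tq x t.tree).dom → B.dom) :=
  if h : t ∈ TVs tq then U.1 ⟨t, h⟩ else ∅

/-- Restriction of a map defined on the `Š`-edges of `T(edge_S(ts))` to the `Š`-edges of the
`i`-th subtree. -/
def restrE (Sc : σ.symb) (tq : τ.symb → Term σ)
    (x : ∀ R : τ.symb, Fin (τ.ar R) → (Fin (σ.ar Sc) → ((tq R).tree).dom))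
    (B : Struct τ) (S : σ.symb) (ts : Fin (σ.ar S) → VTerm σ) (i : Fin (σ.ar S))
    (g : (GammaE Sc tq x (ETerm.tree S ts)).dom → B.dom) :
    (GammaE Sc tq x (ts i).tree).dom → B.dom :=
  fun y => g ⟨fun j => ⟨i, y.1 j⟩, Or.inl ⟨i, y.1, y.2, rfl⟩⟩

/-- `⨉_t(Us) = {f₁ ∪ ⋯ ∪ f_k : f_i ∈ (Us i)_{ts i}}` for the S-term `t = edge_S(ts)` with
`S ≠ Š`: maps on the `Š`-edges of `T(t)` all of whose restrictions lie in the prescribed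
sets. -/
def timesNE (Sc : σ.symb) (tq : τ.symb → Term σ)
    (x : ∀ R : τ.symb, Fin (τ.ar R) → (Fin (σ.ar Sc) → ((tq R).tree).dom))
    (B : Struct τ) (S : σ.symb) (ts : Fin (σ.ar S) → VTerm σ)
    (Us : Fin (σ.ar S) → OmEDom Sc tq x B) :
    Set ((GammaE Sc tq x (ETerm.tree S ts)).dom → B.dom) :=
  {g | ∀ i, restrE Sc tq x B S ts i g ∈ UextE Sc tq x B (Us i) (ts i)}

theorem rootEdgeMem (Sc : σ.symb) (ts : Fin (σ.ar Sc) → VTerm σ) :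
    edgeRoot Sc ts ∈ (ETerm.tree Sc ts).rel Sc :=
  Or.inr ⟨rfl, rfl⟩

/-- `⨉_t(Us; e) = {f₁ ∪ ⋯ ∪ f_k ∪ (r_t ↦ e) : f_i ∈ (Us i)_{ts i}}` for the `Š`-term
`t = edge_Š(ts)` with witness `e`. -/
def timesW (Sc : σ.symb) (tq : τ.symb → Term σ)
    (x : ∀ R : τ.symb, Fin (τ.ar R) → (Fin (σ.ar Sc) → ((tq R).tree).dom))
    (B : Struct τ) (ts : Fin (σ.ar Sc) → VTerm σ)
    (Us : Fin (σ.ar Sc) → OmEDom Sc tq x B) (e : B.dom) :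
    Set ((GammaE Sc tq x (ETerm.tree Sc ts)).dom → B.dom) :=
  {g | (∀ i, restrE Sc tq x B Sc ts i g ∈ UextE Sc tq x B (Us i) (ts i)) ∧
       g ⟨edgeRoot Sc ts, rootEdgeMem Sc ts⟩ = e}

/-- `e ∈ B` is a witness for the tuple `Us` of elements of `Ω(B)`: conditions (B1) and (B2). -/
def IsWitness (Sc : σ.symb) (tq : τ.symb → Term σ)
    (x : ∀ R : τ.symb, Fin (τ.ar R) → (Fin (σ.ar Sc) → ((tq R).tree).dom))
    (B : Struct τ) (Us : Fin (σ.ar Sc) → OmEDom Sc tq x B) (e : B.dom) : Prop :=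
  ∀ ts ∈ TEs tq Sc,
    (∀ i : Fin (σ.ar Sc), VTerm.pr Sc i ts ∈ TVs tq →
        ∀ g ∈ timesW Sc tq x B ts Us e, g ∈ UextE Sc tq x B (Us i) (.pr Sc i ts)) ∧
    (∀ g ∈ timesW Sc tq x B ts Us e, IsHom (GammaE Sc tq x (ETerm.tree Sc ts)) B g)

/-- The right adjoint `Ω` for the template with `P = Š₁`. -/
noncomputable def OmegaE (Sc : σ.symb) (tq : τ.symb → Term σ)
    (x : ∀ R : τ.symb, Fin (τ.ar R) → (Fin (σ.ar Sc) → ((tq R).tree).dom))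
    (B : Struct τ) : Struct σ where
  dom := OmEDom Sc tq x B
  rel S := {Us |
    (S ≠ Sc →
      (∀ ts ∈ TEs tq S, ∀ i : Fin (σ.ar S), VTerm.pr S i ts ∈ TVs tq →
          ∀ g ∈ timesNE Sc tq x B S ts Us, g ∈ UextE Sc tq x B (Us i) (.pr S i ts)) ∧
      (∀ ts ∈ TEs tq S, ∀ g ∈ timesNE Sc tq x B S ts Us,
          IsHom (GammaE Sc tq x (ETerm.tree S ts)) B g)) ∧
    (∀ heq : S = Sc, ∃ e : B.dom,
        IsWitness Sc tq x B (fun j => Us (Fin.cast (congrArg σ.ar heq.symm) j)) e)}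

theorem VTerm.mem_vsub_self (t : VTerm σ) : t ∈ t.vsub := by
  cases t with
  | vertex => exact rfl
  | pr R i ts => exact Or.inl rfl

theorem VTerm.closed_of_pr_mem_vsub (R : σ.symb) (i : Fin (σ.ar R)) (ts : Fin (σ.ar R) → VTerm σ)
    (s : VTerm σ) (h : VTerm.pr R i ts ∈ s.vsub) :
    ts ∈ s.esub R ∧ ∀ j, ts j ∈ s.vsub := by
  induction s with
  | vertex => cases h
  | pr R' i' ts' ih =>
    rcases h with h | h
    · cases h
      exact ⟨Or.inl ⟨rfl, rfl⟩,
        fun j => Or.inr (Set.mem_iUnion.2 ⟨j, VTerm.mem_vsub_self _⟩)⟩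
    · obtain ⟨k, hk⟩ := Set.mem_iUnion.1 h
      obtain ⟨h1, h2⟩ := ih k hk
      exact ⟨Or.inr ⟨k, h1⟩, fun j => Or.inr (Set.mem_iUnion.2 ⟨k, h2 j⟩)⟩

theorem closed_of_pr_mem_TVs (tq : τ.symb → Term σ) (R : σ.symb) (i : Fin (σ.ar R))
    (ts : Fin (σ.ar R) → VTerm σ) (h : VTerm.pr R i ts ∈ TVs tq) :
    ts ∈ TEs tq R ∧ ∀ j, ts j ∈ TVs tq := by
  obtain ⟨Q, hQ⟩ := Set.mem_iUnion.1 h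
  suffices H : ∀ q : Term σ, VTerm.pr R i ts ∈ q.vsub →
      ts ∈ q.esub R ∧ ∀ j, ts j ∈ q.vsub by
    obtain ⟨h1, h2⟩ := H _ hQ
    exact ⟨Set.mem_iUnion.2 ⟨Q, h1⟩, fun j => Set.mem_iUnion.2 ⟨Q, h2 j⟩⟩
  rintro (s | ⟨S, us⟩) hq
  · exact VTerm.closed_of_pr_mem_vsub R i ts s hq
  · obtain ⟨k, hk⟩ := Set.mem_iUnion.1 hq
    obtain ⟨h1, h2⟩ := VTerm.closed_of_pr_mem_vsub R i ts _ hk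
    exact ⟨Or.inr ⟨k, h1⟩, fun j => Set.mem_iUnion.2 ⟨k, h2 j⟩⟩

section Pull

variable {Sc : σ.symb} {tq : τ.symb → Term σ}
  {x : ∀ R : τ.symb, Fin (τ.ar R) → (Fin (σ.ar Sc) → ((tq R).tree).dom)}
  {A : Struct σ} {B : Struct τ}

theorem mem_UextE_vertex (U : OmEDom Sc tq x B) (ht : VTerm.vertex ∈ TVs tq)
    (f : (GammaE Sc tq x VTerm.vertex.tree).dom → B.dom) :
    f ∈ UextE Sc tq x B U .vertex := by
  unfold UextE
  rw [dif_pos ht, U.2.2 ht]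
  exact Set.mem_univ _

theorem isHom_of_mem_UextE (U : OmEDom Sc tq x B) (t : VTerm σ) (ht : t ∈ TVs tq)
    (f : (GammaE Sc tq x t.tree).dom → B.dom) (hf : f ∈ UextE Sc tq x B U t) :
    IsHom (GammaE Sc tq x t.tree) B f := by
  unfold UextE at hf
  rw [dif_pos ht] at hf
  exact U.2.1 ⟨t, ht⟩ f hf

/-- The composite `f ∘ Γ(h)` of a map `f` on the `Š`-edges of `A` with the action on `Š`-edges of
a homomorphism `h : T → A`. -/
def pullE (f : (GammaE Sc tq x A).dom → B.dom) {T : Struct σ} (h : T.dom → A.dom)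
    (hh : IsHom T A h) : (GammaE Sc tq x T).dom → B.dom :=
  fun s => f ⟨fun j => h (s.1 j), hh Sc s.1 s.2⟩

/-- The step at an edge term: if the restrictions of `f ∘ Γ(h)` to the subtrees lie in the entries
of `g ∘ h` at their roots, then `f ∘ Γ(h)` lies in the product `⨉` of these entries, so that the
defining conditions of the edges of `Ω(B)` apply to it. -/
theorem pullE_edge (g : A.dom → (OmegaE Sc tq x B).dom) (hg : IsHom A (OmegaE Sc tq x B) g)
    (f : (GammaE Sc tq x A).dom → B.dom)
    (hf : ∀ s : (GammaE Sc tq x A).dom, IsWitness Sc tq x B (fun i => g (s.1 i)) (f s))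
    (R : σ.symb) (ts : Fin (σ.ar R) → VTerm σ) (hts : ts ∈ TEs tq R)
    (h : (ETerm.tree R ts).dom → A.dom) (hh : IsHom (ETerm.tree R ts) A h)
    (hr : ∀ j, restrE Sc tq x B R ts j (pullE f h hh) ∈
      UextE Sc tq x B (g (h (edgeRoot R ts j))) (ts j)) :
    (∀ i, VTerm.pr R i ts ∈ TVs tq →
      pullE f h hh ∈ UextE Sc tq x B (g (h (edgeRoot R ts i))) (.pr R i ts)) ∧
    IsHom (GammaE Sc tq x (ETerm.tree R ts)) B (pullE f h hh) := by
  by_cases hR : R = Sc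
  · subst hR
    obtain ⟨h1, h2⟩ := hf ⟨fun j => h (edgeRoot R ts j), hh R _ (rootEdgeMem R ts)⟩ ts hts
    exact ⟨fun i hi => h1 i hi _ ⟨hr, rfl⟩, h2 _ ⟨hr, rfl⟩⟩
  · obtain ⟨h1, h2⟩ := (hg R _ (hh R _ (rootEdgeMem R ts))).1 hR
    exact ⟨fun i hi => h1 ts hts i hi _ hr, h2 ts hts _ hr⟩

theorem pullE_mem (g : A.dom → (OmegaE Sc tq x B).dom) (hg : IsHom A (OmegaE Sc tq x B) g)
    (f : (GammaE Sc tq x A).dom → B.dom)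
    (hf : ∀ s : (GammaE Sc tq x A).dom, IsWitness Sc tq x B (fun i => g (s.1 i)) (f s))
    (t : VTerm σ) (ht : t ∈ TVs tq) (h : t.tree.dom → A.dom) (hh : IsHom t.tree A h) :
    pullE f h hh ∈ UextE Sc tq x B (g (h t.root)) t := by
  induction t with
  | vertex =>
    exact mem_UextE_vertex _ ht _
  | pr R i ts ih =>
    obtain ⟨h1, h2⟩ := closed_of_pr_mem_TVs tq R i ts ht
    refine (pullE_edge g hg f hf R ts h1 h hh fun j => ?_).1 i ht
    exact ih j (h2 j) (fun v => h ⟨j, v⟩) fun S y hy => hh S _ (Or.inl ⟨j, y, hy, rfl⟩)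

theorem pullE_isHom (g : A.dom → (OmegaE Sc tq x B).dom) (hg : IsHom A (OmegaE Sc tq x B) g)
    (f : (GammaE Sc tq x A).dom → B.dom)
    (hf : ∀ s : (GammaE Sc tq x A).dom, IsWitness Sc tq x B (fun i => g (s.1 i)) (f s))
    (q : Term σ) (hqV : q.vsub ⊆ TVs tq) (hqE : ∀ S, q.esub S ⊆ TEs tq S)
    (h : q.tree.dom → A.dom) (hh : IsHom q.tree A h) :
    IsHom (GammaE Sc tq x q.tree) B (pullE f h hh) := by
  rcases q with t | ⟨R, ts⟩
  · have ht : t ∈ TVs tq := hqV t.mem_vsub_self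
    have hm := pullE_mem g hg f hf t ht h hh
    exact isHom_of_mem_UextE _ t ht _ hm
  · refine (pullE_edge g hg f hf R ts (hqE R (Or.inl ⟨rfl, rfl⟩)) h hh fun j => ?_).2
    exact pullE_mem g hg f hf (ts j) (hqV (Set.mem_iUnion.2 ⟨j, VTerm.mem_vsub_self _⟩))
      (fun v => h ⟨j, v⟩) fun S y hy => hh S _ (Or.inl ⟨j, y, hy, rfl⟩)

end Pull

/-- if `g : A → Ω(B)` is a homomorphism, then there is a homomorphism
`Γ(A) → B`; explicitly, any map `f` sending each `Š`-edge `s` of `A` to a witness of the edge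
`g^{Š}(s)` of `Ω(B)` is such a homomorphism. -/
theorem omegaE_hard_direction {σ τ : Signature} (Sc : σ.symb) (tq : τ.symb → Term σ)
    (x : ∀ R : τ.symb, Fin (τ.ar R) → (Fin (σ.ar Sc) → ((tq R).tree).dom))
    (hx : ∀ R i, x R i ∈ ((tq R).tree).rel Sc)
    (A : Struct σ) (B : Struct τ)
    (g : A.dom → (OmegaE Sc tq x B).dom) (hg : IsHom A (OmegaE Sc tq x B) g) :
    HomEx (GammaE Sc tq x A) B ∧
    (∀ f : (GammaE Sc tq x A).dom → B.dom,
      (∀ s : (GammaE Sc tq x A).dom, IsWitness Sc tq x B (fun i => g (s.1 i)) (f s)) →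
      IsHom (GammaE Sc tq x A) B f) := by
  have key : ∀ f : (GammaE Sc tq x A).dom → B.dom,
      (∀ s : (GammaE Sc tq x A).dom, IsWitness Sc tq x B (fun i => g (s.1 i)) (f s)) →
      IsHom (GammaE Sc tq x A) B f := by
    rintro f hf R y ⟨h, hh, hy⟩
    have hp := pullE_isHom g hg f hf (tq R) (Set.subset_iUnion (fun R => (tq R).vsub) R)
      (fun S => Set.subset_iUnion (fun R => (tq R).esub S) R) h hh
    -- The tuple `(x_1, …, x_k)` is an `R`-edge of `Γ(Q_R)`, via the identity of `Q_R`.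
    have hm := hp R (fun i => ⟨x R i, hx R i⟩) ⟨id, fun _ _ hz => hz, fun _ => rfl⟩
    have hfy : (fun i => f (y i)) =
        fun i => pullE f h hh (⟨x R i, hx R i⟩ : (GammaE Sc tq x (tq R).tree).dom) :=
      funext fun i => congrArg f (Subtype.ext (hy i))
    rw [hfy]
    exact hm
  choose f hf using fun s : (GammaE Sc tq x A).dom => (hg Sc s.1 s.2).2 rfl
  exact ⟨⟨f, key f hf⟩, key⟩
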